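/- arXiv:2410.10529 — 2 statements merged into one kernel-verified Lean document; each statement's English description precedes it below -/
import Mathlib

section
/- Let Ω ⊆ ℝ³ be an open, simply connected set and let v : ℝ³ → ℝ³ be a continuously differentiable vector field on Ω that is irrotational on Ω, i.e. for every x ∈ Ω its Fréchet derivative Dv(x) is symmetric with respect to the Euclidean inner product: (Dv(x) u) · w = (Dv(x) w) · u for all u, w ∈ ℝ³. Then v admits a scalar potential on Ω: there exists Φ : ℝ³ → ℝ such that for every x ∈ Ω, Φ is differentiable at x and ∇Φ(x) = v(x). -/
open scoped RealInnerProductSpace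
open Filter Topology

/-!
Any two local primitives of a closed 1-form differ by a locally constant function. Hence the values
at `x` of the primitives near `x` are the fibre of a covering space of `Ω`, glued from local
trivializations with transition functions the differences of local primitives. As `Ω` is simply
connected and locally path connected, the identity of `Ω` lifts to this covering space, and the
lift is a global primitive. The local primitives come from the Poincaré lemma on balls.
-/

section Covering

variable {ι B G : Type*} [TopologicalSpace B]

theorem exists_continuousMap_rightInverse_of_isCoveringMap {X : Type*} [TopologicalSpace X]
    [Nonempty X] [SimplyConnectedSpace B] [LocallyPathConnectedSpace B] {p : X → B}
    (hp : IsCoveringMap p) : ∃ s : C(B, X), Function.RightInverse s p := by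
  obtain ⟨e⟩ := ‹Nonempty X›
  obtain ⟨s, ⟨-, hs⟩, -⟩ :=
    hp.existsUnique_continuousMap_lifts (ContinuousMap.id B) (p e) e rfl
  exact ⟨s, congrFun hs⟩

/-- A Čech 1-cocycle on `B` with values in a topological group `G`, written additively, relative to
the open cover `baseSet`. The values of `transition i j` off `baseSet i ∩ baseSet j` are junk. -/
structure CechCocycle (ι B G : Type*) [TopologicalSpace B] [AddGroup G] [TopologicalSpace G] where
  baseSet : ι → Set B
  isOpen_baseSet : ∀ i, IsOpen (baseSet i)
  exists_mem_baseSet : ∀ x, ∃ i, x ∈ baseSet i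
  transition : ι → ι → B → G
  continuousOn_transition : ∀ i j, ContinuousOn (transition i j) (baseSet i ∩ baseSet j)
  transition_add_transition : ∀ i j k, ∀ x ∈ baseSet i ∩ baseSet j ∩ baseSet k,
    transition i j x + transition j k x = transition i k x

namespace CechCocycle

variable [AddGroup G] [TopologicalSpace G]

/-- The principal `G`-bundle of a cocycle, on whose fibres the cocycle acts by right
translations. -/
noncomputable def toFiberBundleCore [ContinuousAdd G] (c : CechCocycle ι B G) :
    FiberBundleCore ι B G where
  baseSet := c.baseSet
  isOpen_baseSet := c.isOpen_baseSet
  indexAt x := (c.exists_mem_baseSet x).choose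
  mem_baseSet_at x := (c.exists_mem_baseSet x).choose_spec
  coordChange i j x g := g + c.transition i j x
  coordChange_self i x hx g :=
    add_eq_left.mpr (add_eq_left.mp (c.transition_add_transition i i i x ⟨⟨hx, hx⟩, hx⟩))
  continuousOn_coordChange i j := continuousOn_snd.add
    ((c.continuousOn_transition i j).comp continuousOn_fst fun _ hp => hp.1)
  coordChange_comp i j k x hx g := by
    rw [add_assoc, c.transition_add_transition i j k x hx]

theorem exists_forall_eq_add_transition [DiscreteTopology G] [SimplyConnectedSpace B]
    [LocallyPathConnectedSpace B] (c : CechCocycle ι B G) :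
    ∃ a : ι → B → G, (∀ i, ContinuousOn (a i) (c.baseSet i)) ∧
      ∀ i j, ∀ x ∈ c.baseSet i ∩ c.baseSet j, a j x = a i x + c.transition i j x := by
  let Z := c.toFiberBundleCore
  have : Nonempty Z.TotalSpace := (inferInstance : Nonempty B).map fun x => ⟨x, (0 : G)⟩
  obtain ⟨s, hs⟩ := exists_continuousMap_rightInverse_of_isCoveringMap
    (FiberBundle.isCoveringMap (F := G) (E := Z.Fiber))
  have hs_mem {i x} (hx : x ∈ c.baseSet i) : (s x).proj ∈ Z.baseSet i := (hs x).symm ▸ hx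
  refine ⟨fun i x => (Z.localTriv i (s x)).2, fun i => ?_, fun i j x hx => ?_⟩
  · exact continuous_snd.comp_continuousOn <|
      (Z.localTriv i).continuousOn.comp s.continuous.continuousOn fun x hx =>
        (Z.mem_localTriv_source i (s x)).mpr (hs_mem hx)
  · have h := Z.coordChange_comp (Z.indexAt (s x).proj) i j (s x).proj
      ⟨⟨Z.mem_baseSet_at _, hs_mem hx.1⟩, hs_mem hx.2⟩ (s x).2
    calc (Z.localTriv j (s x)).2
        = (Z.localTriv i (s x)).2 + c.transition i j (s x).proj := h.symm
      _ = (Z.localTriv i (s x)).2 + c.transition i j x := by rw [hs x]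

end CechCocycle

theorem continuousOn_iff_eventually_eq_of_discreteTopology [TopologicalSpace G]
    [DiscreteTopology G] {f : B → G} {s : Set B} (hs : IsOpen s) :
    ContinuousOn f s ↔ ∀ x ∈ s, ∀ᶠ y in 𝓝 x, f y = f x := by
  simp only [hs.continuousOn_iff, ContinuousAt, nhds_discrete, tendsto_pure]

theorem exists_forall_eventually_sub_eq_sub [AddGroup G] [SimplyConnectedSpace B]
    [LocallyPathConnectedSpace B] {U : ι → Set B} (hU : ∀ i, IsOpen (U i))
    (hcover : ∀ x, ∃ i, x ∈ U i) {f : ι → B → G}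
    (hf : ∀ i j, ∀ x ∈ U i ∩ U j, ∀ᶠ y in 𝓝 x, f i y - f j y = f i x - f j x) :
    ∃ Φ : B → G, ∀ i, ∀ x ∈ U i, ∀ᶠ y in 𝓝 x, Φ y - f i y = Φ x - f i x := by
  choose index h_index using hcover
  let : TopologicalSpace G := ⊥
  have : DiscreteTopology G := ⟨rfl⟩
  let c : CechCocycle ι B G :=
    { baseSet := U
      isOpen_baseSet := hU
      exists_mem_baseSet x := ⟨index x, h_index x⟩
      transition i j x := f i x - f j x
      continuousOn_transition i j :=
        (continuousOn_iff_eventually_eq_of_discreteTopology ((hU i).inter (hU j))).mpr (hf i j)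
      transition_add_transition _ _ _ _ _ := sub_add_sub_cancel _ _ _ }
  obtain ⟨a, ha_cont, ha⟩ := c.exists_forall_eq_add_transition
  let Φ x := a (index x) x + f (index x) x
  have hΦ (i x) (hx : x ∈ U i) : Φ x - f i x = a i x := by
    rw [ha (index x) i x ⟨h_index x, hx⟩]
    exact add_sub_assoc _ _ _
  refine ⟨Φ, fun i x hx => ?_⟩
  filter_upwards [(hU i).mem_nhds hx,
    (continuousOn_iff_eventually_eq_of_discreteTopology (hU i)).mp (ha_cont i) x hx] with y hy hay
  rw [hΦ i y hy, hΦ i x hx, hay]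

end Covering

section Primitive

variable {E F : Type*} [NormedAddCommGroup E] [NormedSpace ℝ E] [NormedAddCommGroup F]
  [NormedSpace ℝ F] {Ω : Set E} {ω : E → E →L[ℝ] F}

theorem eventually_sub_eq_sub_of_eventually_hasFDerivAt {f g : E → F} {x : E}
    (hf : ∀ᶠ y in 𝓝 x, HasFDerivAt f (ω y) y) (hg : ∀ᶠ y in 𝓝 x, HasFDerivAt g (ω y) y) :
    ∀ᶠ y in 𝓝 x, f y - g y = f x - g x := by
  obtain ⟨s, hs, hso, hxs⟩ := eventually_nhds_iff.mp (hf.and hg)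
  have hsub (y) (hy : y ∈ s) : HasFDerivAt (fun z => f z - g z) (0 : E →L[ℝ] F) y := by
    obtain ⟨hfy, hgy⟩ := hs y hy
    simpa only [sub_self] using hfy.fun_sub hgy
  have hopen := hso.isOpen_inter_preimage_of_fderiv_eq_zero
    (fun y hy => (hsub y hy).differentiableAt.differentiableWithinAt)
    (fun y hy => (hsub y hy).fderiv) {f x - g x}
  filter_upwards [hopen.mem_nhds ⟨hxs, rfl⟩] with y hy using hy.2

theorem exists_hasFDerivAt_of_locally_exists_hasFDerivAt (hΩ : IsOpen Ω) [SimplyConnectedSpace Ω]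
    (hω : ∀ x ∈ Ω, ∃ f : E → F, ∀ᶠ y in 𝓝 x, HasFDerivAt f (ω y) y) :
    ∃ Φ : E → F, ∀ x ∈ Ω, HasFDerivAt Φ (ω x) x := by
  have : LocallyPathConnectedSpace Ω := hΩ.locallyPathConnectedSpace
  -- Indexing the cover by all functions `E → F` avoids choosing a primitive near each point.
  let U (f : E → F) : Set Ω := {x | ∀ᶠ y in 𝓝 (x : E), HasFDerivAt f (ω y) y}
  have hU (f) : IsOpen (U f) := isOpen_setOfPred_eventually_nhds.preimage continuous_subtype_val
  have hcompat (f g) (x) (hx : x ∈ U f ∩ U g) :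
      ∀ᶠ y : Ω in 𝓝 x, f y - g y = f x - g x :=
    continuousAt_subtype_val.eventually
      (eventually_sub_eq_sub_of_eventually_hasFDerivAt hx.1 hx.2)
  obtain ⟨Φ, hΦ⟩ := exists_forall_eventually_sub_eq_sub hU (fun x => hω x x.2) hcompat
  refine ⟨Function.extend Subtype.val Φ 0, fun x hx => ?_⟩
  obtain ⟨f, hf⟩ := hω x hx
  refine (hf.self_of_nhds.add_const (Φ ⟨x, hx⟩ - f x)).congr_of_eventuallyEq ?_
  rw [EventuallyEq, ← hΩ.isOpenEmbedding_subtypeVal.map_nhds_eq ⟨x, hx⟩, eventually_map]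
  filter_upwards [hΦ f ⟨x, hx⟩ hf] with y hy
  rw [Subtype.val_injective.extend_apply, ← hy, add_sub_cancel]

theorem exists_hasFDerivAt_of_fderiv_symmetric [CompleteSpace F] (hΩ : IsOpen Ω)
    [SimplyConnectedSpace Ω] (hω : DifferentiableOn ℝ ω Ω)
    (hsymm : ∀ x ∈ Ω, ∀ u w, fderiv ℝ ω x u w = fderiv ℝ ω x w u) :
    ∃ Φ : E → F, ∀ x ∈ Ω, HasFDerivAt Φ (ω x) x := by
  refine exists_hasFDerivAt_of_locally_exists_hasFDerivAt hΩ fun x hx => ?_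
  obtain ⟨r, hr, hball⟩ := Metric.isOpen_iff.mp hΩ x hx
  obtain ⟨f, hf⟩ := (convex_ball x r).exists_forall_hasFDerivAt_of_fderiv_symmetric
    Metric.isOpen_ball (hω.mono hball) fun y hy => hsymm y (hball hy)
  exact ⟨f, eventually_of_mem (Metric.ball_mem_nhds x hr) hf⟩

end Primitive

theorem stmt_0_general {E : Type*} [NormedAddCommGroup E] [InnerProductSpace ℝ E]
    [CompleteSpace E] {Ω : Set E} (hΩ : IsOpen Ω) [SimplyConnectedSpace Ω] {v : E → E}
    (hv : DifferentiableOn ℝ v Ω)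
    (hirr : ∀ x ∈ Ω, ∀ u w : E, ⟪fderiv ℝ v x u, w⟫ = ⟪fderiv ℝ v x w, u⟫) :
    ∃ Φ : E → ℝ, ∀ x ∈ Ω, HasGradientAt Φ (v x) x := by
  have hω (x) (hx : x ∈ Ω) :
      HasFDerivAt (fun y => innerSL ℝ (v y)) ((innerSL ℝ).comp (fderiv ℝ v x)) x :=
    (innerSL ℝ (E := E)).hasFDerivAt.comp x (hv.differentiableAt (hΩ.mem_nhds hx)).hasFDerivAt
  have hsymm (x) (hx : x ∈ Ω) (u w : E) : fderiv ℝ (fun y => innerSL ℝ (v y)) x u w =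
      fderiv ℝ (fun y => innerSL ℝ (v y)) x w u := by
    rw [(hω x hx).fderiv]
    exact hirr x hx u w
  exact exists_hasFDerivAt_of_fderiv_symmetric hΩ
    (fun x hx => (hω x hx).differentiableAt.differentiableWithinAt) hsymm

/-- **Existence of a scalar potential for an irrotational C¹ vector field on a
simply connected open subset of ℝ³.** -/
theorem stmt_0 (Ω : Set (EuclideanSpace ℝ (Fin 3))) (hΩ : IsOpen Ω)
    (hsc : SimplyConnectedSpace Ω)
    (v : EuclideanSpace ℝ (Fin 3) → EuclideanSpace ℝ (Fin 3))
    (hv : ContDiffOn ℝ 1 v Ω)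
    (hirr : ∀ x ∈ Ω, ∀ u w : EuclideanSpace ℝ (Fin 3),
      ⟪fderiv ℝ v x u, w⟫ = ⟪fderiv ℝ v x w, u⟫) :
    ∃ Φ : EuclideanSpace ℝ (Fin 3) → ℝ, ∀ x ∈ Ω, HasGradientAt Φ (v x) x :=
  stmt_0_general hΩ (hv.differentiableOn one_ne_zero) hirr
end

section
/- Green's representation formula on a ball: let B = B(c, R) ⊆ ℝ³ be the open ball of center c and radius R > 0, and let φ be harmonic on an open neighborhood of the closed ball (φ is C² there and Δφ = 0). Then for every interior point x ∈ B, φ(x) = ∫_{S²} [ G(c + Rω − x) (∇φ(c + Rω) · ω) − φ(c + Rω) (∇G(c + Rω − x) · ω) ] R² dσ(ω), where ω is the outward unit normal to ∂B at the boundary point c + Rω. -/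
open MeasureTheory Metric
open scoped RealInnerProductSpace

/-- The free-space Green's function of the Laplace equation in ℝ³. -/
noncomputable def G (z : EuclideanSpace ℝ (Fin 3)) : ℝ := 1 / (4 * Real.pi * ‖z‖)

/-- The Laplacian of a scalar function on ℝ³: the sum of the three unmixed second
partial derivatives. -/
noncomputable def lap (u : EuclideanSpace ℝ (Fin 3) → ℝ)
    (y : EuclideanSpace ℝ (Fin 3)) : ℝ :=
  ∑ i : Fin 3,
    fderiv ℝ (fun z => fderiv ℝ u z (EuclideanSpace.single i 1)) y
      (EuclideanSpace.single i 1)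

/-!
Write `h = G(· - x)`. The Green field `h ∇φ - φ ∇h` is divergence free away from `x`, since `φ` and
`h` are harmonic there. Integrating it against the gradient of a cutoff that is radial about `c`
near `∂B(c, R)` and radial about `x` near `x` shows, in polar coordinates, that averages of its flux
through spheres about `c` agree with averages of its flux through small spheres about `x`; as the
weights are arbitrary, the fluxes themselves agree. As `ρ → 0`, the flux through `∂B(x, ρ)` is the
mean of `φ(y) + ⟪∇φ(y), y - x⟫` over that sphere, which tends to `φ(x)`.
-/

open Set Filter Topology

section Divergence

variable {E F : Type*} [NormedAddCommGroup E] [NormedSpace ℝ E]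
  [NormedAddCommGroup F] [NormedSpace ℝ F]

/-- The divergence of a vector field `V`, encoded without coordinates as the trace of the
derivative of `V`. -/
noncomputable def divergence (V : E → E) (x : E) : ℝ :=
  LinearMap.trace ℝ E (fderiv ℝ V x)

lemma divergence_sub {V W : E → E} {x : E} (hV : DifferentiableAt ℝ V x)
    (hW : DifferentiableAt ℝ W x) :
    divergence (fun y => V y - W y) x = divergence V x - divergence W x := by
  simp [divergence, fderiv_fun_sub hV hW]

lemma divergence_comp_sub (V : E → E) (a x : E) :
    divergence (fun y => V (y - a)) x = divergence V (x - a) := by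
  rw [divergence, fderiv_comp_sub, divergence]

lemma divergence_eq_sum {ι : Type*} [Fintype ι] (b : Module.Basis ι ℝ E) (V : E → E) (x : E) :
    divergence V x = ∑ i, b.coord i (fderiv ℝ V x (b i)) := by
  classical
  simp [divergence, LinearMap.trace_eq_matrix_trace ℝ b, Matrix.trace, LinearMap.toMatrix_apply]

lemma contDiff_smul_of_tsupport_subset {n : WithTop ℕ∞} {η : E → ℝ} {V : E → F} {O : Set E}
    (hO : IsOpen O) (hV : ContDiffOn ℝ n V O) (hη : ContDiff ℝ n η) (hηO : tsupport η ⊆ O) :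
    ContDiff ℝ n (fun y => η y • V y) := by
  refine contDiff_iff_contDiffAt.2 fun y => ?_
  by_cases hy : y ∈ tsupport η
  · exact hη.contDiffAt.smul (hV.contDiffAt (hO.mem_nhds (hηO hy)))
  · refine (contDiffAt_const (c := (0 : F))).congr_of_eventuallyEq ?_
    filter_upwards [notMem_tsupport_iff_eventuallyEq.1 hy] with z hz
    simp [hz]

variable [FiniteDimensional ℝ E]

lemma divergence_smul {f : E → ℝ} {V : E → E} {x : E} (hf : DifferentiableAt ℝ f x)
    (hV : DifferentiableAt ℝ V x) :
    divergence (fun y => f y • V y) x = f x * divergence V x + fderiv ℝ f x (V x) := by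
  simp [divergence, fderiv_fun_smul hf hV]

variable [MeasurableSpace E] [BorelSpace E] {μ : Measure E} [μ.IsAddHaarMeasure]

lemma integral_fderiv_apply_eq_zero {f : E → F} (hf : ContDiff ℝ 1 f)
    (hfc : HasCompactSupport f) (v : E) : ∫ x, fderiv ℝ f x v ∂μ = 0 := by
  have hint : Integrable f μ := hf.continuous.integrable_of_hasCompactSupport hfc
  have hint' : Integrable (fun x => fderiv ℝ f x v) μ :=
    ((hf.continuous_fderiv one_ne_zero).clm_apply continuous_const).integrable_of_hasCompactSupport
      (hfc.fderiv_apply ℝ v)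
  simpa using integral_smul_fderiv_eq_neg_fderiv_smul_of_integrable (μ := μ) (v := v)
    (f := fun _ => (1 : ℝ)) (g := f) (by simp) (by simpa using hint') (by simpa using hint)
    (by simp) fun x _ => hf.differentiable one_ne_zero x

lemma integral_divergence_eq_zero {V : E → E} (hV : ContDiff ℝ 1 V) (hVc : HasCompactSupport V) :
    ∫ x, divergence V x ∂μ = 0 := by
  have hint : ∀ v, Integrable (fun x => fderiv ℝ V x v) μ := fun v =>
    ((hV.continuous_fderiv one_ne_zero).clm_apply continuous_const).integrable_of_hasCompactSupport
      (hVc.fderiv_apply ℝ v)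
  let b := Module.finBasis ℝ E
  let coord i : E →L[ℝ] ℝ := (b.coord i).toContinuousLinearMap
  calc ∫ x, divergence V x ∂μ = ∫ x, ∑ i, coord i (fderiv ℝ V x (b i)) ∂μ := by
        simp [divergence_eq_sum b, coord]
    _ = ∑ i, coord i (∫ x, fderiv ℝ V x (b i) ∂μ) := by
        rw [integral_finsetSum _ fun i _ => (coord i).integrable_comp (hint (b i))]
        exact Finset.sum_congr rfl fun i _ => (coord i).integral_comp_comm (hint (b i))
    _ = 0 := by simp [integral_fderiv_apply_eq_zero hV hVc]

lemma integral_fderiv_apply_eq_zero_of_divergence_eq_zero {η : E → ℝ} {V : E → E} {O : Set E}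
    (hO : IsOpen O) (hV : ContDiffOn ℝ 1 V O) (hdiv : ∀ y ∈ O, divergence V y = 0)
    (hη : ContDiff ℝ 1 η) (hηc : HasCompactSupport η) (hηO : tsupport η ⊆ O) :
    ∫ y, fderiv ℝ η y (V y) ∂μ = 0 := by
  rw [← integral_divergence_eq_zero (μ := μ) (contDiff_smul_of_tsupport_subset hO hV hη hηO)
    hηc.smul_right]
  congr 1 with y
  by_cases hy : y ∈ tsupport η
  · have hyO := hO.mem_nhds (hηO hy)
    rw [divergence_smul (hη.differentiable one_ne_zero y)
      ((hV.contDiffAt hyO).differentiableAt one_ne_zero), hdiv y (hηO hy), mul_zero, zero_add]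
  · have hη_zero : η =ᶠ[𝓝 y] fun _ => 0 := notMem_tsupport_iff_eventuallyEq.1 hy
    have hηV_zero : (fun z => η z • V z) =ᶠ[𝓝 y] fun _ => 0 := by
      filter_upwards [hη_zero] with z hz
      simp [hz]
    simp [divergence, hη_zero.fderiv_eq, hηV_zero.fderiv_eq]

end Divergence

section Gradient

variable {E : Type*} [NormedAddCommGroup E] [InnerProductSpace ℝ E] [CompleteSpace E]

lemma gradient_comp_sub (f : E → ℝ) (a x : E) :
    gradient (fun y => f (y - a)) x = gradient f (x - a) := by
  rw [gradient, fderiv_comp_sub, gradient]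

lemma contDiffAt_gradient {f : E → ℝ} {x : E} {m n : WithTop ℕ∞} (hf : ContDiffAt ℝ n f x)
    (hmn : m + 1 ≤ n) : ContDiffAt ℝ m (gradient f) x :=
  (InnerProductSpace.toDual ℝ E).symm.contDiff.contDiffAt.comp x (hf.fderiv_right hmn)

lemma hasGradientAt_norm {x : E} (hx : x ≠ 0) :
    HasGradientAt (fun y : E => ‖y‖) (‖x‖⁻¹ • x) x := by
  have hx' : ‖x‖ ≠ 0 := norm_ne_zero_iff.2 hx
  have h := (hasStrictFDerivAt_norm_sq x).hasFDerivAt.sqrt (pow_ne_zero 2 hx')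
  simp only [Real.sqrt_sq (norm_nonneg _)] at h
  refine hasGradientAt_iff_hasFDerivAt.2 (h.congr_fderiv (ContinuousLinearMap.ext fun v => ?_))
  simp only [one_div, mul_inv_rev, smul_apply, coe_innerSL_apply, nsmul_eq_mul, Nat.cast_ofNat,
    smul_eq_mul, map_smul, InnerProductSpace.toDual_apply_apply]
  field_simp

lemma hasGradientAt_norm_zpow {x : E} (hx : x ≠ 0) (m : ℤ) :
    HasGradientAt (fun y : E => ‖y‖ ^ m) ((m * ‖x‖ ^ (m - 2)) • x) x := by
  have hx' : ‖x‖ ≠ 0 := norm_ne_zero_iff.2 hx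
  refine hasGradientAt_iff_hasFDerivAt.2 (((hasDerivAt_zpow m _ (.inl hx')).comp_hasFDerivAt x
    (hasGradientAt_norm hx).hasFDerivAt).congr_fderiv (ContinuousLinearMap.ext fun v => ?_))
  simp only [zpow_sub₀ hx', zpow_ofNat, map_smul, smul_apply,
    InnerProductSpace.toDual_apply_apply, smul_eq_mul]
  field_simp

/-- Green's field, `h ∇φ - φ ∇h`: the vector field whose flux is the boundary integrand of Green's
second identity. -/
noncomputable def greenField (h φ : E → ℝ) (y : E) : E :=
  h y • gradient φ y - φ y • gradient h y

lemma contDiffAt_greenField {h φ : E → ℝ} {y : E} (hh : ContDiffAt ℝ 2 h y)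
    (hφ : ContDiffAt ℝ 2 φ y) : ContDiffAt ℝ 1 (greenField h φ) y :=
  ((hh.of_le one_le_two).smul (contDiffAt_gradient hφ one_add_one_eq_two.le)).sub
    ((hφ.of_le one_le_two).smul (contDiffAt_gradient hh one_add_one_eq_two.le))

end Gradient

section DivergenceGradient

variable {E : Type*} [NormedAddCommGroup E] [InnerProductSpace ℝ E] [FiniteDimensional ℝ E]

lemma divergence_norm_zpow_smul {x : E} (hx : x ≠ 0) (m : ℤ) :
    divergence (fun y : E => ‖y‖ ^ m • y) x = (m + Module.finrank ℝ E) * ‖x‖ ^ m := by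
  have hx' : ‖x‖ ≠ 0 := norm_ne_zero_iff.2 hx
  have hgrad := hasGradientAt_norm_zpow hx m
  have hdiv_id : divergence (fun y : E => y) x = Module.finrank ℝ E := by simp [divergence]
  rw [divergence_smul hgrad.differentiableAt differentiableAt_fun_id, ← inner_gradient_left,
    hgrad.gradient, real_inner_smul_left, real_inner_self_eq_norm_sq, hdiv_id, zpow_sub₀ hx']
  field_simp
  ring

/- The cross terms `⟪∇h, ∇φ⟫` cancel. -/
lemma divergence_greenField {h φ : E → ℝ} {y : E} (hh : ContDiffAt ℝ 2 h y)
    (hφ : ContDiffAt ℝ 2 φ y) :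
    divergence (greenField h φ) y =
      h y * divergence (gradient φ) y - φ y * divergence (gradient h) y := by
  have hh₁ := hh.differentiableAt two_ne_zero
  have hφ₁ := hφ.differentiableAt two_ne_zero
  have hh₂ := (contDiffAt_gradient hh one_add_one_eq_two.le).differentiableAt one_ne_zero
  have hφ₂ := (contDiffAt_gradient hφ one_add_one_eq_two.le).differentiableAt one_ne_zero
  rw [show greenField h φ = fun y => h y • gradient φ y - φ y • gradient h y from rfl,
    divergence_sub (hh₁.fun_smul hφ₂) (hφ₁.fun_smul hh₂), divergence_smul hh₁ hφ₂,
    divergence_smul hφ₁ hh₂, ← inner_gradient_left, ← inner_gradient_left,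
    real_inner_comm (gradient h y)]
  ring

end DivergenceGradient

section Polar

variable {E F : Type*} [NormedAddCommGroup E] [NormedSpace ℝ E] [FiniteDimensional ℝ E]
  [MeasurableSpace E] [BorelSpace E] [NormedAddCommGroup F] [NormedSpace ℝ F]

lemma integral_volumeIoiPow (n : ℕ) (f : ℝ → F) :
    ∫ r, f r ∂Measure.volumeIoiPow n = ∫ r in Ioi 0, r ^ n • f r := by
  simp only [Measure.volumeIoiPow, ENNReal.ofReal]
  rw [integral_withDensity_eq_integral_smul
      (measurable_subtype_coe.pow_const n).real_toNNReal,
    integral_subtype_comap measurableSet_Ioi fun r : ℝ => Real.toNNReal (r ^ n) • f r]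
  refine setIntegral_congr_fun measurableSet_Ioi fun r hr => ?_
  rw [NNReal.smul_def, Real.coe_toNNReal _ (pow_nonneg (mem_Ioi.1 hr).le n)]

variable (μ : Measure E) [μ.IsAddHaarMeasure]

lemma continuousOn_integral_sphere {f : E → sphere (0 : E) 1 → F} {c : E} {a b : ℝ} (ha : 0 ≤ a)
    (hf : ContinuousOn f.uncurry ((closedBall c b \ ball c a) ×ˢ univ)) :
    ContinuousOn (fun r : ℝ => ∫ ω, f (c + r • (ω : E)) ω ∂μ.toSphere) (Icc a b) := by
  refine continuousOn_integral_of_compact_support (k := univ) isCompact_univ ?_ (by simp)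
  refine hf.comp (f := fun p : ℝ × sphere (0 : E) 1 => (c + p.1 • (p.2 : E), p.2)) (by fun_prop) ?_
  rintro ⟨r, ω⟩ ⟨⟨har, hrb⟩, -⟩
  simp [norm_smul, abs_of_nonneg (ha.trans har), har, hrb]

lemma tendsto_integral_sphere [CompleteSpace F] {f : E → F} {x : E}
    (hf : ∀ᶠ y in 𝓝 x, ContinuousAt f y) :
    Tendsto (fun r : ℝ => ∫ ω : sphere (0 : E) 1, f (x + r • (ω : E)) ∂μ.toSphere)
      (𝓝[>] 0) (𝓝 (μ.toSphere.real univ • f x)) := by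
  obtain ⟨δ, hδ, hball⟩ := nhds_basis_closedBall.eventually_iff.1 hf
  have hcont : ContinuousOn (fun r : ℝ => ∫ ω : sphere (0 : E) 1, f (x + r • (ω : E)) ∂μ.toSphere)
      (Icc 0 δ) := by
    refine continuousOn_integral_sphere μ (f := fun y _ => f y) le_rfl ?_
    exact fun p hp => ((hball hp.1.1).comp continuousAt_fst).continuousWithinAt
  have hlim := (hcont 0 (left_mem_Icc.2 hδ.le)).tendsto.mono_left
    (nhdsWithin_le_of_mem (Icc_mem_nhdsGT hδ))
  simpa only [zero_smul, add_zero, integral_const] using hlim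

variable [Nontrivial E]

lemma integral_eq_integral_Ioi_integral_sphere {f : E → F} (hf : Integrable f μ) :
    ∫ x, f x ∂μ = ∫ r in Ioi (0 : ℝ), r ^ (Module.finrank ℝ E - 1) •
      ∫ ω : sphere (0 : E) 1, f (r • (ω : E)) ∂μ.toSphere := by
  have hpolar := μ.measurePreserving_homeomorphUnitSphereProd
  have hemb := (homeomorphUnitSphereProd E).measurableEmbedding
  set f' : sphere (0 : E) 1 × Ioi (0 : ℝ) → F := fun p => f (p.2.1 • p.1.1)
  have hf' : (fun y : ({0}ᶜ : Set E) => f y) = f' ∘ homeomorphUnitSphereProd E := by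
    funext y
    simp [f', smul_smul, show ‖(y : E)‖ ≠ 0 from norm_ne_zero_iff.2 y.2]
  have hint : Integrable f' (μ.toSphere.prod (.volumeIoiPow (Module.finrank ℝ E - 1))) := by
    rw [← hpolar.integrable_comp_emb hemb, ← hf']
    exact (integrableOn_iff_comap_subtypeVal (measurableSet_singleton 0).compl).1 hf.integrableOn
  calc ∫ x, f x ∂μ = ∫ y : ({0}ᶜ : Set E), f y ∂(μ.comap (↑)) := by
        rw [integral_subtype_comap (measurableSet_singleton 0).compl f, restrict_compl_singleton]
    _ = ∫ p, f' p ∂μ.toSphere.prod (.volumeIoiPow (Module.finrank ℝ E - 1)) := by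
        rw [hf']
        exact hpolar.integral_comp hemb f'
    _ = _ := by
        rw [integral_prod_symm _ hint]
        exact integral_volumeIoiPow _ fun r => ∫ ω : sphere (0 : E) 1, f (r • ω.1) ∂μ.toSphere

end Polar

section Radial

lemma eventuallyEq_const_of_notMem_tsupport_deriv {F : Type*} [NormedAddCommGroup F]
    [NormedSpace ℝ F] {f : ℝ → F} (hf : Differentiable ℝ f) {x : ℝ} (hx : x ∉ tsupport (deriv f)) :
    f =ᶠ[𝓝 x] fun _ => f x := by
  obtain ⟨ε, hε, hball⟩ := eventually_nhds_iff_ball.1 (notMem_tsupport_iff_eventuallyEq.1 hx)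
  filter_upwards [ball_mem_nhds x hε] with y hy
  exact isOpen_ball.is_const_of_deriv_eq_zero (convex_ball x ε).isPreconnected hf.differentiableOn
    hball hy (mem_ball_self hε)

variable {E : Type*} [NormedAddCommGroup E] {H : ℝ → ℝ}

lemma eventuallyEq_const_comp_norm_sub (hH : ContDiff ℝ 1 H) (h0 : 0 ∉ tsupport (deriv H)) (c : E) :
    (fun y => H ‖y - c‖) =ᶠ[𝓝 c] fun _ => H 0 :=
  (tendsto_norm_sub_self c).eventually
    (eventuallyEq_const_of_notMem_tsupport_deriv (hH.differentiable one_ne_zero) h0)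

lemma support_sub_comp_norm_sub_subset {c x : E} {H₁ H₂ : ℝ → ℝ} {K a₁ b₁ a₂ b₂ : ℝ}
    (hba : dist x c + b₂ ≤ a₁) (hab₁ : a₁ ≤ b₁) (hab₂ : a₂ ≤ b₂)
    (hH₁a : ∀ r ≤ a₁, H₁ r = K) (hH₁b : ∀ r, b₁ ≤ r → H₁ r = 0)
    (hH₂a : ∀ r ≤ a₂, H₂ r = K) (hH₂b : ∀ r, b₂ ≤ r → H₂ r = 0) :
    Function.support (fun y => H₁ ‖y - c‖ - H₂ ‖y - x‖) ⊆ closedBall c b₁ \ ball x a₂ := by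
  intro y hy
  have htriangle := dist_triangle y x c
  refine ⟨?_, fun hmem => hy ?_⟩
  · by_contra hmem
    rw [mem_closedBall, not_le] at hmem
    refine hy ?_
    simp only [← dist_eq_norm]
    rw [hH₁b _ hmem.le, hH₂b _ (by linarith), sub_self]
  · rw [mem_ball] at hmem
    simp only [← dist_eq_norm]
    rw [hH₁a _ (by linarith), hH₂a _ hmem.le, sub_self]

variable [InnerProductSpace ℝ E]

lemma contDiff_comp_norm_sub (hH : ContDiff ℝ 1 H) (h0 : 0 ∉ tsupport (deriv H)) (c : E) :
    ContDiff ℝ 1 fun y : E => H ‖y - c‖ := by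
  refine contDiff_iff_contDiffAt.2 fun y => ?_
  rcases eq_or_ne y c with rfl | hy
  · exact contDiffAt_const.congr_of_eventuallyEq (eventuallyEq_const_comp_norm_sub hH h0 y)
  · exact hH.contDiffAt.comp y ((contDiffAt_id.sub contDiffAt_const).norm ℝ (sub_ne_zero.2 hy))

lemma fderiv_comp_norm_sub_apply [CompleteSpace E] (hH : ContDiff ℝ 1 H)
    (h0 : 0 ∉ tsupport (deriv H)) (c y v : E) :
    fderiv ℝ (fun z : E => H ‖z - c‖) y v = deriv H ‖y - c‖ * (‖y - c‖⁻¹ * ⟪v, y - c⟫) := by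
  rcases eq_or_ne y c with rfl | hy
  · simp [(eventuallyEq_const_comp_norm_sub hH h0 y).fderiv_eq]
  · have hderiv := (hH.differentiable one_ne_zero ‖y - c‖).hasDerivAt.comp_hasFDerivAt (y - c)
      (hasGradientAt_norm (sub_ne_zero.2 hy)).hasFDerivAt
    rw [fderiv_comp_sub (f := fun z => H ‖z‖), ← Function.comp_def H, hderiv.fderiv]
    simp [inner_sub_right, real_inner_comm]

end Radial

section Flux

variable {E : Type*} [NormedAddCommGroup E] [InnerProductSpace ℝ E] [FiniteDimensional ℝ E]
  [MeasurableSpace E] [BorelSpace E]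

/-- The outward flux of the vector field `V` through the sphere of center `c` and radius `r`,
written as an integral over the unit sphere. -/
noncomputable def sphereFlux (V : E → E) (c : E) (r : ℝ) : ℝ :=
  r ^ (Module.finrank ℝ E - 1) *
    ∫ ω : sphere (0 : E) 1, ⟪V (c + r • (ω : E)), ω⟫ ∂(volume : Measure E).toSphere

variable {V : E → E} {c : E} {a b : ℝ}

lemma continuousOn_sphereFlux (ha : 0 ≤ a) (hV : ContinuousOn V (closedBall c b \ ball c a)) :
    ContinuousOn (sphereFlux V c) (Icc a b) := by
  refine (by fun_prop : Continuous fun r : ℝ => r ^ _).continuousOn.mul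
    (continuousOn_integral_sphere volume (f := fun y ω => ⟪V y, ω⟫) ha ?_)
  exact (hV.comp continuousOn_fst fun p hp => hp.1).inner (by fun_prop)

variable {H : ℝ → ℝ}

lemma integrable_fderiv_comp_norm_sub_apply (hH : ContDiff ℝ 1 H) (ha : 0 ≤ a)
    (hsupp : tsupport (deriv H) ⊆ Ioo a b)
    (hV : ContinuousOn V (closedBall c b \ ball c a)) :
    Integrable fun y => fderiv ℝ (fun z => H ‖z - c‖) y (V y) := by
  have h0 : (0 : ℝ) ∉ tsupport (deriv H) := fun h => (hsupp h).1.not_ge ha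
  have hcont : ContinuousOn (fun y => fderiv ℝ (fun z => H ‖z - c‖) y (V y))
      (closedBall c b \ ball c a) :=
    ((contDiff_comp_norm_sub hH h0 c).continuous_fderiv one_ne_zero).continuousOn.clm_apply hV
  rw [← integrableOn_iff_integrable_of_support_subset]
  · exact hcont.integrableOn_compact ((isCompact_closedBall c b).diff isOpen_ball)
  · intro y hy
    have hderiv : deriv H ‖y - c‖ ≠ 0 := by
      intro h
      simp [fderiv_comp_norm_sub_apply hH h0, h] at hy
    have := hsupp (subset_tsupport _ hderiv)
    simpa [dist_eq_norm] using ⟨this.2.le, this.1.le⟩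

lemma integral_fderiv_comp_norm_sub_apply [Nontrivial E] (hH : ContDiff ℝ 1 H) (ha : 0 ≤ a)
    (hsupp : tsupport (deriv H) ⊆ Ioo a b)
    (hV : ContinuousOn V (closedBall c b \ ball c a)) :
    ∫ y, fderiv ℝ (fun z => H ‖z - c‖) y (V y) = ∫ r, deriv H r * sphereFlux V c r := by
  have h0 : (0 : ℝ) ∉ tsupport (deriv H) := fun h => (hsupp h).1.not_ge ha
  have hderiv_zero : ∀ r ≤ 0, deriv H r = 0 := fun r hr =>
    image_eq_zero_of_notMem_tsupport fun h => (hsupp h).1.not_ge (hr.trans ha)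
  have hint := (integrable_fderiv_comp_norm_sub_apply hH ha hsupp hV).comp_add_left c
  calc ∫ y, fderiv ℝ (fun z => H ‖z - c‖) y (V y)
      = ∫ r in Ioi (0 : ℝ), r ^ (Module.finrank ℝ E - 1) • ∫ ω : sphere (0 : E) 1,
          fderiv ℝ (fun z => H ‖z - c‖) (c + r • (ω : E)) (V (c + r • (ω : E)))
          ∂(volume : Measure E).toSphere := by
        rw [← integral_add_left_eq_self _ c, integral_eq_integral_Ioi_integral_sphere _ hint]
    _ = ∫ r in Ioi (0 : ℝ), deriv H r * sphereFlux V c r := by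
        refine setIntegral_congr_fun measurableSet_Ioi fun r (hr : 0 < r) => ?_
        have hnorm (ω : sphere (0 : E) 1) : ‖r • (ω : E)‖ = r := by
          simp [norm_smul, abs_of_pos hr]
        simp only [fderiv_comp_norm_sub_apply hH h0, add_sub_cancel_left, hnorm,
          real_inner_smul_right, inv_mul_cancel_left₀ hr.ne', integral_const_mul, smul_eq_mul,
          sphereFlux]
        ring
    _ = ∫ r, deriv H r * sphereFlux V c r :=
        setIntegral_eq_integral_of_forall_compl_eq_zero fun r hr => by
          rw [hderiv_zero r (not_lt.1 hr), zero_mul]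

end Flux

section Averaging

variable {f f₁ f₂ : ℝ → ℝ} {a b a₁ b₁ a₂ b₂ : ℝ}

/- The fundamental lemma of the calculus of variations, applied to `f - K`. -/
lemma eqOn_const_of_forall_integral_mul_eq {K : ℝ} (hab : a < b)
    (hf : ContinuousOn f (Icc a b))
    (h : ∀ g : ℝ → ℝ, Continuous g → tsupport g ⊆ Ioo a b → ∫ t, g t * f t = (∫ t, g t) * K) :
    EqOn f (fun _ => K) (Icc a b) := by
  have hloc : LocallyIntegrableOn (fun t => f t - K) (Ioo a b) :=
    ((hf.sub continuousOn_const).integrableOn_Icc.mono_set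
      Ioo_subset_Icc_self).locallyIntegrableOn
  have hae : ∀ᵐ t, t ∈ Ioo a b → f t - K = 0 := by
    refine isOpen_Ioo.ae_eq_zero_of_integral_contDiff_smul_eq_zero hloc fun g hg hgc hgs => ?_
    have hgf : Integrable fun t => g t * f t := by
      rw [← integrableOn_iff_integrable_of_support_subset (s := Icc a b)]
      · exact (hg.continuous.continuousOn.mul hf).integrableOn_Icc
      · exact (Function.support_mul_subset_left g f).trans
          ((subset_tsupport g).trans (hgs.trans Ioo_subset_Icc_self))
    have hgK : Integrable fun t => g t * K :=
      (hg.continuous.integrable_of_hasCompactSupport hgc).mul_const K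
    simp only [smul_eq_mul, mul_sub]
    rw [integral_sub hgf hgK, h g hg.continuous hgs, integral_mul_const, sub_self]
  refine Measure.eqOn_Icc_of_ae_eq volume hab.ne ?_ hf continuousOn_const
  rw [← restrict_Ioo_eq_restrict_Icc]
  exact (ae_restrict_iff' measurableSet_Ioo).2 (hae.mono fun t ht hmem => sub_eq_zero.1 (ht hmem))

lemma exists_continuous_tsupport_subset_Ioo_integral_eq_one (hab : a < b) :
    ∃ ψ : ℝ → ℝ, Continuous ψ ∧ tsupport ψ ⊆ Ioo a b ∧ ∫ t, ψ t = 1 := by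
  let ψ : ContDiffBump ((a + b) / 2) :=
    ⟨(b - a) / 8, (b - a) / 4, by linarith, by linarith⟩
  refine ⟨ψ.normed volume, ψ.continuous_normed, ?_, ψ.integral_normed⟩
  rw [ψ.tsupport_normed_eq, Real.closedBall_eq_Icc]
  exact Icc_subset_Ioo (by simp only [ψ]; linarith) (by simp only [ψ]; linarith)

lemma eq_of_forall_integral_mul_eq_integral_mul (h₁ : a₁ < b₁) (h₂ : a₂ < b₂)
    (hf₁ : ContinuousOn f₁ (Icc a₁ b₁)) (hf₂ : ContinuousOn f₂ (Icc a₂ b₂))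
    (h : ∀ g₁ g₂ : ℝ → ℝ, Continuous g₁ → Continuous g₂ → tsupport g₁ ⊆ Ioo a₁ b₁ →
      tsupport g₂ ⊆ Ioo a₂ b₂ → ∫ t, g₁ t = ∫ t, g₂ t →
      ∫ t, g₁ t * f₁ t = ∫ t, g₂ t * f₂ t)
    {s t : ℝ} (hs : s ∈ Icc a₁ b₁) (ht : t ∈ Icc a₂ b₂) : f₁ s = f₂ t := by
  obtain ⟨ψ₁, hψ₁, hψ₁s, hψ₁i⟩ := exists_continuous_tsupport_subset_Ioo_integral_eq_one h₁
  obtain ⟨ψ₂, hψ₂, hψ₂s, hψ₂i⟩ := exists_continuous_tsupport_subset_Ioo_integral_eq_one h₂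
  have hf₁_const : f₁ s = ∫ t, ψ₂ t * f₂ t := by
    refine eqOn_const_of_forall_integral_mul_eq h₁ hf₁ (fun g hg hgs => ?_) hs
    rw [h g (fun t => (∫ u, g u) * ψ₂ t) hg (hψ₂.const_mul _) hgs
      ((tsupport_mul_subset_right (f := fun _ => ∫ u, g u)).trans hψ₂s)
      (by rw [integral_const_mul, hψ₂i, mul_one])]
    simp only [mul_assoc, integral_const_mul]
  have hf₂_const : f₂ t = ∫ t, ψ₁ t * f₁ t := by
    refine eqOn_const_of_forall_integral_mul_eq h₂ hf₂ (fun g hg hgs => ?_) ht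
    rw [← h (fun t => (∫ u, g u) * ψ₁ t) g (hψ₁.const_mul _) hg
      ((tsupport_mul_subset_right (f := fun _ => ∫ u, g u)).trans hψ₁s) hgs
      (by rw [integral_const_mul, hψ₁i, mul_one])]
    simp only [mul_assoc, integral_const_mul]
  rw [hf₁_const, hf₂_const, h ψ₁ ψ₂ hψ₁ hψ₂ hψ₁s hψ₂s (hψ₁i.trans hψ₂i.symm)]

lemma exists_contDiff_deriv_eq_of_tsupport_subset_Ioo {g : ℝ → ℝ} (hg : Continuous g)
    (hgs : tsupport g ⊆ Ioo a b) :
    ∃ H : ℝ → ℝ, ContDiff ℝ 1 H ∧ deriv H = g ∧ (∀ r ≤ a, H r = -∫ t, g t) ∧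
      ∀ r, b ≤ r → H r = 0 := by
  have hderiv : deriv (fun r => ∫ t in b..r, g t) = g := funext (hg.deriv_integral g b)
  have hsupp : Function.support g ⊆ Ioo a b := (subset_tsupport g).trans hgs
  refine ⟨fun r => ∫ t in b..r, g t, contDiff_one_iff_deriv.2 ⟨?_, hderiv.symm ▸ hg⟩, hderiv,
    fun r hr => ?_, fun r hr => ?_⟩
  · exact fun r => (intervalIntegral.integral_hasDerivAt_right (hg.intervalIntegrable b r)
      hg.aestronglyMeasurable.stronglyMeasurableAtFilter hg.continuousAt).differentiableAt
  · change ∫ t in b..r, g t = _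
    rw [intervalIntegral.integral_symm, intervalIntegral.integral_eq_integral_of_support_subset]
    exact hsupp.trans fun t ht => ⟨hr.trans_lt ht.1, ht.2.le⟩
  · refine intervalIntegral.integral_zero_ae (.of_forall fun t ht => ?_)
    rw [uIoc_of_le hr] at ht
    exact Function.notMem_support.1 fun h => (hsupp h).2.not_gt ht.1

end Averaging

section FluxComparison

variable {E : Type*} [NormedAddCommGroup E] [InnerProductSpace ℝ E] [FiniteDimensional ℝ E]
  [Nontrivial E] [MeasurableSpace E] [BorelSpace E] {V : E → E} {O : Set E} {c x : E}

/- The two cutoffs agree near `x` and vanish outside `closedBall c b₁`, so their difference is a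
test function supported in the shell. -/
lemma integral_mul_sphereFlux_eq_of_integral_eq (hO : IsOpen O) (hV : ContDiffOn ℝ 1 V O)
    (hdiv : ∀ y ∈ O, divergence V y = 0) {a₁ b₁ a₂ b₂ : ℝ} (ha₂ : 0 < a₂) (hab₂ : a₂ < b₂)
    (hba : dist x c + b₂ ≤ a₁) (hab₁ : a₁ < b₁) (hshell : closedBall c b₁ \ ball x a₂ ⊆ O)
    {g₁ g₂ : ℝ → ℝ} (hg₁ : Continuous g₁) (hg₂ : Continuous g₂)
    (hg₁s : tsupport g₁ ⊆ Ioo a₁ b₁) (hg₂s : tsupport g₂ ⊆ Ioo a₂ b₂)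
    (hg : ∫ t, g₁ t = ∫ t, g₂ t) :
    ∫ r, g₁ r * sphereFlux V c r = ∫ r, g₂ r * sphereFlux V x r := by
  obtain ⟨H₁, hH₁, rfl, hH₁a, hH₁b⟩ := exists_contDiff_deriv_eq_of_tsupport_subset_Ioo hg₁ hg₁s
  obtain ⟨H₂, hH₂, rfl, hH₂a, hH₂b⟩ := exists_contDiff_deriv_eq_of_tsupport_subset_Ioo hg₂ hg₂s
  have ha₁ : 0 < a₁ := by linarith [dist_nonneg (x := x) (y := c)]
  have hη₁ : ContDiff ℝ 1 fun y => H₁ ‖y - c‖ :=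
    contDiff_comp_norm_sub hH₁ (fun h => (hg₁s h).1.not_gt ha₁) c
  have hη₂ : ContDiff ℝ 1 fun y => H₂ ‖y - x‖ :=
    contDiff_comp_norm_sub hH₂ (fun h => (hg₂s h).1.not_gt ha₂) x
  have hVc : ContinuousOn V (closedBall c b₁ \ ball c a₁) := hV.continuousOn.mono
    ((sdiff_subset_sdiff_right (ball_subset_ball' (by linarith))).trans hshell)
  have hVx : ContinuousOn V (closedBall x b₂ \ ball x a₂) := hV.continuousOn.mono
    ((sdiff_subset_sdiff_left (closedBall_subset_closedBall' (by linarith))).trans hshell)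
  have hηs := support_sub_comp_norm_sub_subset hba hab₁.le hab₂.le (hg ▸ hH₁a) hH₁b hH₂a hH₂b
  have hzero : ∫ y, fderiv ℝ (fun z => H₁ ‖z - c‖ - H₂ ‖z - x‖) y (V y) = 0 :=
    integral_fderiv_apply_eq_zero_of_divergence_eq_zero hO hV hdiv (hη₁.sub hη₂)
      (.of_support_subset_isCompact ((isCompact_closedBall c b₁).diff isOpen_ball) hηs)
      ((closure_minimal hηs (isClosed_closedBall.sdiff isOpen_ball)).trans hshell)
  rw [← integral_fderiv_comp_norm_sub_apply hH₁ ha₁.le hg₁s hVc,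
    ← integral_fderiv_comp_norm_sub_apply hH₂ ha₂.le hg₂s hVx, ← sub_eq_zero, ← hzero,
    ← integral_sub (integrable_fderiv_comp_norm_sub_apply hH₁ ha₁.le hg₁s hVc)
      (integrable_fderiv_comp_norm_sub_apply hH₂ ha₂.le hg₂s hVx)]
  congr 1 with y
  rw [fderiv_fun_sub (hη₁.differentiable one_ne_zero y) (hη₂.differentiable one_ne_zero y),
    sub_apply]

lemma sphereFlux_eq_sphereFlux (hO : IsOpen O) (hV : ContDiffOn ℝ 1 V O)
    (hdiv : ∀ y ∈ O, divergence V y = 0) {R ρ : ℝ} (hρ : 0 < ρ) (hR : dist x c + ρ < R)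
    (hshell : closedBall c R \ ball x ρ ⊆ O) : sphereFlux V c R = sphereFlux V x ρ := by
  set d := dist x c
  set b := (ρ + (R - d)) / 2
  have hd : 0 ≤ d := dist_nonneg
  have hρb : ρ < b := by simp only [b]; linarith
  have hbR : d + b < R := by simp only [b]; linarith
  have hc_shell : closedBall c R \ ball c (d + b) ⊆ O :=
    (sdiff_subset_sdiff_right (ball_subset_ball' (by linarith))).trans hshell
  have hx_shell : closedBall x b \ ball x ρ ⊆ O :=
    (sdiff_subset_sdiff_left (closedBall_subset_closedBall' (by linarith))).trans hshell
  exact eq_of_forall_integral_mul_eq_integral_mul hbR hρb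
    (continuousOn_sphereFlux (by linarith) (hV.continuousOn.mono hc_shell))
    (continuousOn_sphereFlux hρ.le (hV.continuousOn.mono hx_shell))
    (fun _ _ => integral_mul_sphereFlux_eq_of_integral_eq hO hV hdiv hρ hρb le_rfl hbR hshell)
    (right_mem_Icc.2 hbR.le) (left_mem_Icc.2 hρb.le)

end FluxComparison

section GreensFunction

local notation "ℝ³" => EuclideanSpace ℝ (Fin 3)

lemma divergence_gradient_eq_lap {φ : ℝ³ → ℝ} {y : ℝ³} (hφ : ContDiffAt ℝ 2 φ y) :
    divergence (gradient φ) y = lap φ y := by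
  have hgrad : DifferentiableAt ℝ (gradient φ) y :=
    (contDiffAt_gradient hφ one_add_one_eq_two.le).differentiableAt one_ne_zero
  rw [divergence_eq_sum (EuclideanSpace.basisFun (Fin 3) ℝ).toBasis, lap]
  refine Finset.sum_congr rfl fun i _ => ?_
  have hpartial : (fun z => fderiv ℝ φ z (EuclideanSpace.single i 1)) =
      (EuclideanSpace.proj i : ℝ³ →L[ℝ] ℝ) ∘ gradient φ := by
    funext z
    simp [← inner_gradient_left, EuclideanSpace.inner_single_right]
  rw [hpartial, ((EuclideanSpace.proj i : ℝ³ →L[ℝ] ℝ).hasFDerivAt.comp y hgrad.hasFDerivAt).fderiv]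
  simp

lemma contDiffAt_G {z : ℝ³} (hz : z ≠ 0) {n : WithTop ℕ∞} : ContDiffAt ℝ n G z := by
  unfold G
  exact contDiffAt_const.div (contDiffAt_const.mul (contDiffAt_norm ℝ hz))
    (by simp [hz, Real.pi_ne_zero])

lemma gradient_G {z : ℝ³} (hz : z ≠ 0) :
    gradient G z = (-(4 * Real.pi)⁻¹) • ‖z‖ ^ (-3 : ℤ) • z := by
  have hG : G = fun y => (4 * Real.pi)⁻¹ * ‖y‖ ^ (-1 : ℤ) := by
    funext y
    simp [G, mul_comm]
  have hnorm := (hasGradientAt_norm_zpow hz (-1)).hasFDerivAt.const_mul (4 * Real.pi)⁻¹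
  rw [hG, gradient, hnorm.fderiv]
  norm_num [smul_smul]

lemma divergence_gradient_G {z : ℝ³} (hz : z ≠ 0) : divergence (gradient G) z = 0 := by
  have h : gradient G =ᶠ[𝓝 z] fun y => (-(4 * Real.pi)⁻¹) • ‖y‖ ^ (-3 : ℤ) • y :=
    (isOpen_ne.eventually_mem hz).mono fun y hy => gradient_G hy
  have hdiff : DifferentiableAt ℝ (fun y : ℝ³ => ‖y‖ ^ (-3 : ℤ) • y) z :=
    (hasGradientAt_norm_zpow hz (-3)).differentiableAt.smul differentiableAt_fun_id
  rw [divergence, h.fderiv_eq, ← divergence, divergence_smul (differentiableAt_const _) hdiff,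
    divergence_norm_zpow_smul hz]
  simp

lemma volume_toSphere_real_univ_fin_three : (volume : Measure ℝ³).toSphere.real univ =
    4 * Real.pi := by
  rw [Measure.toSphere_real_apply_univ, measureReal_def, EuclideanSpace.volume_ball_fin_three]
  rw [ENNReal.ofReal_one, one_pow, one_mul, ENNReal.toReal_ofReal (by positivity),
    finrank_euclideanSpace_fin]
  ring

variable {φ : ℝ³ → ℝ} {x y : ℝ³}

lemma contDiffAt_G_sub {n : WithTop ℕ∞} (hy : y ≠ x) : ContDiffAt ℝ n (fun z => G (z - x)) y :=
  (contDiffAt_G (sub_ne_zero.2 hy)).comp (g := G) y (contDiffAt_id.sub contDiffAt_const)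

lemma contDiffAt_greenField_G (hφ : ContDiffAt ℝ 2 φ y) (hy : y ≠ x) :
    ContDiffAt ℝ 1 (greenField (fun z => G (z - x)) φ) y :=
  contDiffAt_greenField (contDiffAt_G_sub hy) hφ

lemma divergence_greenField_G (hφ : ContDiffAt ℝ 2 φ y) (hy : y ≠ x) :
    divergence (greenField (fun z => G (z - x)) φ) y = G (y - x) * lap φ y := by
  have hgrad : gradient (fun z => G (z - x)) = fun z => gradient G (z - x) :=
    funext fun z => gradient_comp_sub G x z
  rw [divergence_greenField (contDiffAt_G_sub hy) hφ, divergence_gradient_eq_lap hφ, hgrad,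
    divergence_comp_sub, divergence_gradient_G (sub_ne_zero.2 hy), mul_zero, sub_zero]

/- The factor `ρ` left over from `ρ² G` is absorbed into `ρ ω = y - x`, so that the integrand is a
function of the boundary point `y` alone. -/
lemma sphereFlux_greenField_G (φ : ℝ³ → ℝ) (x : ℝ³) {ρ : ℝ} (hρ : 0 < ρ) :
    sphereFlux (greenField (fun z => G (z - x)) φ) x ρ =
      (4 * Real.pi)⁻¹ * ∫ ω : sphere (0 : ℝ³) 1,
        (⟪gradient φ (x + ρ • (ω : ℝ³)), x + ρ • (ω : ℝ³) - x⟫ + φ (x + ρ • (ω : ℝ³)))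
        ∂(volume : Measure ℝ³).toSphere := by
  rw [sphereFlux, ← integral_const_mul, ← integral_const_mul]
  congr 1 with ω
  have hω : ‖(ω : ℝ³)‖ = 1 := norm_eq_of_mem_sphere ω
  have hne : ρ • (ω : ℝ³) ≠ 0 := by simp [hρ.ne', ← norm_ne_zero_iff]
  have hnorm : ‖ρ • (ω : ℝ³)‖ = ρ := by simp [norm_smul, abs_of_pos hρ]
  simp only [greenField, gradient_comp_sub, add_sub_cancel_left, gradient_G hne, hnorm,
    inner_sub_left, real_inner_smul_left, real_inner_smul_right, real_inner_self_eq_norm_sq, hω,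
    finrank_euclideanSpace, Fintype.card_fin]
  simp only [G, hnorm]
  field_simp
  simp

lemma tendsto_sphereFlux_greenField_G (hφ : ContDiffAt ℝ 1 φ x) :
    Tendsto (sphereFlux (greenField (fun z => G (z - x)) φ) x) (𝓝[>] 0) (𝓝 (φ x)) := by
  have hcont : ∀ᶠ y in 𝓝 x, ContinuousAt (fun y => ⟪gradient φ y, y - x⟫ + φ y) y := by
    filter_upwards [hφ.eventually (by simp)] with y hy
    exact ((contDiffAt_gradient hy (m := 0) (by simp)).continuousAt.inner
      (continuousAt_id.sub continuousAt_const)).add hy.continuousAt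
  have hlim := (tendsto_integral_sphere volume hcont).const_mul (4 * Real.pi)⁻¹
  rw [volume_toSphere_real_univ_fin_three, sub_self, inner_zero_right, zero_add, smul_eq_mul,
    inv_mul_cancel_left₀ (by positivity)] at hlim
  exact hlim.congr' (eventually_mem_nhdsWithin.mono fun ρ hρ =>
    (sphereFlux_greenField_G φ x hρ).symm)

end GreensFunction

/-- **Green's representation formula on a ball**: if `φ` is harmonic on an open
neighborhood of the closed ball `B(c, R)`, then for every interior point `x`,
`φ(x) = ∫_{S²} [G(c + Rω − x) (∇φ(c + Rω) · ω) − φ(c + Rω) (∇G(c + Rω − x) · ω)] R² dσ(ω)`. -/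
theorem stmt_5 (c : EuclideanSpace ℝ (Fin 3)) (R : ℝ) (hR : 0 < R)
    (φ : EuclideanSpace ℝ (Fin 3) → ℝ)
    (U : Set (EuclideanSpace ℝ (Fin 3))) (hU : IsOpen U)
    (hBU : closedBall c R ⊆ U)
    (hφ : ContDiffOn ℝ 2 φ U)
    (hharm : ∀ y ∈ U, lap φ y = 0) :
    ∀ x ∈ ball c R,
      φ x = ∫ ω : sphere (0 : EuclideanSpace ℝ (Fin 3)) 1,
        (G (c + R • (ω : EuclideanSpace ℝ (Fin 3)) - x) *
            ⟪gradient φ (c + R • (ω : EuclideanSpace ℝ (Fin 3))),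
              (ω : EuclideanSpace ℝ (Fin 3))⟫
          - φ (c + R • (ω : EuclideanSpace ℝ (Fin 3))) *
            ⟪gradient G (c + R • (ω : EuclideanSpace ℝ (Fin 3)) - x),
              (ω : EuclideanSpace ℝ (Fin 3))⟫) * R ^ 2
        ∂((volume : Measure (EuclideanSpace ℝ (Fin 3))).toSphere) := by
  intro x hx
  have hφ_at : ∀ y ∈ U, ContDiffAt ℝ 2 φ y := fun y hy => hφ.contDiffAt (hU.mem_nhds hy)
  set V := greenField (fun z => G (z - x)) φ with hV_def
  have hV : ContDiffOn ℝ 1 V (U \ {x}) := fun y hy =>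
    (contDiffAt_greenField_G (hφ_at y hy.1) hy.2).contDiffWithinAt
  have hdiv : ∀ y ∈ U \ {x}, divergence V y = 0 := fun y hy => by
    rw [divergence_greenField_G (hφ_at y hy.1) hy.2, hharm y hy.1, mul_zero]
  have hflux : ∀ᶠ ρ in 𝓝[>] 0, sphereFlux V x ρ = sphereFlux V c R := by
    filter_upwards [Ioo_mem_nhdsGT (sub_pos.2 (mem_ball.1 hx))] with ρ hρ
    refine (sphereFlux_eq_sphereFlux (hU.sdiff isClosed_singleton) hV hdiv hρ.1
      (lt_sub_iff_add_lt'.1 hρ.2) (sdiff_subset_sdiff hBU ?_)).symm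
    exact singleton_subset_iff.2 (mem_ball_self hρ.1)
  have hlim : Tendsto (sphereFlux V x) (𝓝[>] 0) (𝓝 (φ x)) :=
    tendsto_sphereFlux_greenField_G ((hφ_at x (hBU (ball_subset_closedBall hx))).of_le one_le_two)
  rw [tendsto_nhds_unique hlim (tendsto_const_nhds.congr' (hflux.mono fun _ h => h.symm)),
    integral_mul_const, mul_comm]
  simp [sphereFlux, hV_def, greenField, gradient_comp_sub, inner_sub_left, real_inner_smul_left]
end
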